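/- arXiv:math/0408218 — 2 statements merged into one kernel-verified Lean document; each statement's English description precedes it below -/
import Mathlib

section
/- (Finite-dimensional Larson–Sweedler theorem, integral version.) Let A be a finite-dimensional associative unital algebra over ℂ with a comultiplication Δ such that the left leg of Δ is all of A. If there exists a faithful left integral on A, then the linear maps T₁, T₂ : A ⊗ A → A ⊗ A determined by T₁(a ⊗ b) = Δ(a)(1 ⊗ b) and T₂(a ⊗ b) = (a ⊗ 1)Δ(b) are bijective, and (A, Δ) is a Hopf algebra: there exist a linear map ε : A → ℂ and a linear map S : A → A such that (ε ⊗ id)(Δ(a)) = a, (id ⊗ ε)(Δ(a)) = a, m(S ⊗ id)(Δ(a)) = ε(a)·1 and m(id ⊗ S)(Δ(a)) = ε(a)·1 for all a ∈ A, where m denotes the multiplication map A ⊗ A → A. -/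
open TensorProduct

noncomputable section

variable {A : Type*} [Ring A] [Algebra ℂ A]

/-- The slice map `id ⊗ ω : A ⊗ A → A`. -/
def sliceR (ω : A →ₗ[ℂ] ℂ) : A ⊗[ℂ] A →ₗ[ℂ] A :=
  (TensorProduct.rid ℂ A).toLinearMap ∘ₗ TensorProduct.map LinearMap.id ω

/-- The slice map `ω ⊗ id : A ⊗ A → A`. -/
def sliceL (ω : A →ₗ[ℂ] ℂ) : A ⊗[ℂ] A →ₗ[ℂ] A :=
  (TensorProduct.lid ℂ A).toLinearMap ∘ₗ TensorProduct.map ω LinearMap.id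

/-- Coassociativity of a comultiplication `Δ : A → A ⊗ A`:
`(Δ ⊗ id) ∘ Δ = (id ⊗ Δ) ∘ Δ` (up to the associator). -/
def IsCoassoc (Δ : A →ₐ[ℂ] A ⊗[ℂ] A) : Prop :=
  ∀ a : A,
    TensorProduct.assoc ℂ A A A (TensorProduct.map Δ.toLinearMap LinearMap.id (Δ a)) =
      TensorProduct.map LinearMap.id Δ.toLinearMap (Δ a)

/-- A left integral: a nonzero functional with `(id ⊗ φ)(Δ a) = φ(a)·1` for all `a`. -/
def IsLeftIntegral (Δ : A →ₐ[ℂ] A ⊗[ℂ] A) (φ : A →ₗ[ℂ] ℂ) : Prop :=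
  φ ≠ 0 ∧ ∀ a : A, sliceR φ (Δ a) = φ a • (1 : A)

/-- A right integral: a nonzero functional with `(ψ ⊗ id)(Δ a) = ψ(a)·1` for all `a`. -/
def IsRightIntegral (Δ : A →ₐ[ℂ] A ⊗[ℂ] A) (ψ : A →ₗ[ℂ] ℂ) : Prop :=
  ψ ≠ 0 ∧ ∀ a : A, sliceL ψ (Δ a) = ψ a • (1 : A)

/-- A faithful functional: the bilinear form `(a, b) ↦ ω(ab)` is non-degenerate. -/
def IsFaithful (ω : A →ₗ[ℂ] ℂ) : Prop :=
  (∀ b : A, (∀ a : A, ω (a * b) = 0) → b = 0) ∧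
  (∀ b : A, (∀ a : A, ω (b * a) = 0) → b = 0)

/-- The left leg of an element `x ∈ A ⊗ A`: the span of `{(id ⊗ ω)(x) : ω ∈ A*}`. -/
def leftLegOf (x : A ⊗[ℂ] A) : Submodule ℂ A :=
  Submodule.span ℂ {y : A | ∃ ω : A →ₗ[ℂ] ℂ, y = sliceR ω x}

/-- The right leg of an element `x ∈ A ⊗ A`: the span of `{(ω ⊗ id)(x) : ω ∈ A*}`. -/
def rightLegOf (x : A ⊗[ℂ] A) : Submodule ℂ A :=
  Submodule.span ℂ {y : A | ∃ ω : A →ₗ[ℂ] ℂ, y = sliceL ω x}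

/-- The left leg of `Δ`: the span of `{(id ⊗ ω)(Δ a) : a ∈ A, ω ∈ A*}`. -/
def leftLeg (Δ : A →ₐ[ℂ] A ⊗[ℂ] A) : Submodule ℂ A :=
  Submodule.span ℂ {y : A | ∃ (a : A) (ω : A →ₗ[ℂ] ℂ), y = sliceR ω (Δ a)}

/-- The right leg of `Δ`: the span of `{(ω ⊗ id)(Δ a) : a ∈ A, ω ∈ A*}`. -/
def rightLeg (Δ : A →ₐ[ℂ] A ⊗[ℂ] A) : Submodule ℂ A :=
  Submodule.span ℂ {y : A | ∃ (a : A) (ω : A →ₗ[ℂ] ℂ), y = sliceL ω (Δ a)}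

/-- A comultiplication is full if both of its legs are all of `A`. -/
def IsFull (Δ : A →ₐ[ℂ] A ⊗[ℂ] A) : Prop :=
  leftLeg Δ = ⊤ ∧ rightLeg Δ = ⊤

/-- The linear map `T₁` with `T₁ (a ⊗ b) = Δ(a) * (1 ⊗ b)`. -/
def T1 (Δ : A →ₐ[ℂ] A ⊗[ℂ] A) : A ⊗[ℂ] A →ₗ[ℂ] A ⊗[ℂ] A :=
  LinearMap.mul' ℂ (A ⊗[ℂ] A) ∘ₗ
    TensorProduct.map Δ.toLinearMap (TensorProduct.mk ℂ A A 1)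

/-- The linear map `T₁'` with `T₁' (a ⊗ b) = Δ(a) * (b ⊗ 1)`. -/
def T1' (Δ : A →ₐ[ℂ] A ⊗[ℂ] A) : A ⊗[ℂ] A →ₗ[ℂ] A ⊗[ℂ] A :=
  LinearMap.mul' ℂ (A ⊗[ℂ] A) ∘ₗ
    TensorProduct.map Δ.toLinearMap ((TensorProduct.mk ℂ A A).flip 1)

/-- The linear map `T₂` with `T₂ (a ⊗ b) = (a ⊗ 1) * Δ(b)`. -/
def T2 (Δ : A →ₐ[ℂ] A ⊗[ℂ] A) : A ⊗[ℂ] A →ₗ[ℂ] A ⊗[ℂ] A :=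
  LinearMap.mul' ℂ (A ⊗[ℂ] A) ∘ₗ
    TensorProduct.map ((TensorProduct.mk ℂ A A).flip 1) Δ.toLinearMap

/-- The linear map `T₂'` with `T₂' (a ⊗ b) = (1 ⊗ a) * Δ(b)`. -/
def T2' (Δ : A →ₐ[ℂ] A ⊗[ℂ] A) : A ⊗[ℂ] A →ₗ[ℂ] A ⊗[ℂ] A :=
  LinearMap.mul' ℂ (A ⊗[ℂ] A) ∘ₗ
    TensorProduct.map (TensorProduct.mk ℂ A A 1) Δ.toLinearMap

/-- A left cointegral: a nonzero element `h` with `Δ(a)(1 ⊗ h) = a ⊗ h` for all `a`. -/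
def IsLeftCointegral (Δ : A →ₐ[ℂ] A ⊗[ℂ] A) (h : A) : Prop :=
  h ≠ 0 ∧ ∀ a : A, Δ a * ((1 : A) ⊗ₜ[ℂ] h) = a ⊗ₜ[ℂ] h

/-- A right cointegral: a nonzero element `k` with `(k ⊗ 1)Δ(a) = k ⊗ a` for all `a`. -/
def IsRightCointegral (Δ : A →ₐ[ℂ] A ⊗[ℂ] A) (k : A) : Prop :=
  k ≠ 0 ∧ ∀ a : A, (k ⊗ₜ[ℂ] (1 : A)) * Δ a = k ⊗ₜ[ℂ] a

/-- `Δ₁₃(a) = (1 ⊗ σ)(Δ(a) ⊗ 1)`, viewed in `A ⊗ (A ⊗ A)`. -/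
def delta13 (Δ : A →ₐ[ℂ] A ⊗[ℂ] A) (a : A) : A ⊗[ℂ] (A ⊗[ℂ] A) :=
  TensorProduct.map LinearMap.id (TensorProduct.comm ℂ A A).toLinearMap
    (TensorProduct.assoc ℂ A A A (Δ a ⊗ₜ[ℂ] (1 : A)))

section helpers

theorem sliceR_tmul (ω : A →ₗ[ℂ] ℂ) (a b : A) : sliceR ω (a ⊗ₜ[ℂ] b) = ω b • a := by
  simp [sliceR]

theorem sliceL_tmul (ω : A →ₗ[ℂ] ℂ) (a b : A) : sliceL ω (a ⊗ₜ[ℂ] b) = ω a • b := by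
  simp [sliceL]

theorem T1_tmul (Δ : A →ₐ[ℂ] A ⊗[ℂ] A) (a b : A) :
    T1 Δ (a ⊗ₜ[ℂ] b) = Δ a * ((1 : A) ⊗ₜ[ℂ] b) := by
  simp [T1]

theorem T2_tmul (Δ : A →ₐ[ℂ] A ⊗[ℂ] A) (a b : A) :
    T2 Δ (a ⊗ₜ[ℂ] b) = (a ⊗ₜ[ℂ] (1 : A)) * Δ b := by
  simp [T2]

theorem sliceR_left_mul (ω : A →ₗ[ℂ] ℂ) (a : A) (x : A ⊗[ℂ] A) :
    sliceR ω ((a ⊗ₜ[ℂ] (1 : A)) * x) = a * sliceR ω x := by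
  induction x with
  | zero => simp
  | tmul p q => simp [sliceR_tmul]
  | add x y hx hy => simp only [mul_add, map_add, hx, hy]

theorem eq_zero_of_sliceR [FiniteDimensional ℂ A] (x : A ⊗[ℂ] A)
    (h : ∀ ω : A →ₗ[ℂ] ℂ, sliceR ω x = 0) : x = 0 := by
  let b := Module.finBasis ℂ A
  have key : ∀ y : A ⊗[ℂ] A, y = ∑ i, (sliceR (b.coord i) y) ⊗ₜ[ℂ] (b i) := by
    intro y
    induction y with
    | zero => simp
    | tmul p q =>
      simp only [sliceR_tmul, TensorProduct.smul_tmul, ← TensorProduct.tmul_sum]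
      congr 1
      exact (b.sum_repr q).symm
    | add x y hx hy =>
      simp only [map_add, TensorProduct.add_tmul, Finset.sum_add_distrib]
      rw [← hx, ← hy]
  rw [key x]
  simp [h]

theorem T2_inj [FiniteDimensional ℂ A] (Δ : A →ₐ[ℂ] A ⊗[ℂ] A)
    (φ : A →ₗ[ℂ] ℂ) (hφ : IsLeftIntegral Δ φ) (hφf : IsFaithful φ) :
    Function.Injective (T2 Δ) := by
  rw [injective_iff_map_eq_zero]
  intro x hx
  have h1 : ∀ (c : A) (y : A ⊗[ℂ] A),
      sliceR φ (T2 Δ y * Δ c) = sliceR ((LinearMap.mul ℂ A).flip c |> φ.comp) y := by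
    intro c y
    induction y with
    | zero => simp
    | tmul p q =>
      rw [T2_tmul, mul_assoc, ← map_mul, sliceR_left_mul, hφ.2, sliceR_tmul]
      simp
    | add x y hx hy => simp only [add_mul, map_add, hx, hy]
  let Φ : A →ₗ[ℂ] (A →ₗ[ℂ] ℂ) := (LinearMap.compRight ℂ φ).comp (LinearMap.mul ℂ A).flip
  have hΦ : Function.Injective Φ := by
    rw [injective_iff_map_eq_zero]
    intro c hc
    refine hφf.1 c fun a => ?_
    have := LinearMap.congr_fun hc a
    simpa [Φ] using this
  have hs : Function.Surjective Φ :=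
    (LinearMap.injective_iff_surjective_of_finrank_eq_finrank
      (Subspace.dual_finrank_eq (K := ℂ) (V := A)).symm).1 hΦ
  refine eq_zero_of_sliceR x fun ω => ?_
  obtain ⟨c, rfl⟩ := hs ω
  have := h1 c x
  rw [hx, zero_mul, map_zero] at this
  exact this.symm

theorem T2_left_mul (Δ : A →ₐ[ℂ] A ⊗[ℂ] A) (a : A) (x : A ⊗[ℂ] A) :
    T2 Δ ((a ⊗ₜ[ℂ] (1 : A)) * x) = (a ⊗ₜ[ℂ] (1 : A)) * T2 Δ x := by
  induction x with
  | zero => simp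
  | tmul p q => simp [T2_tmul, ← mul_assoc]
  | add x y hx hy => simp only [mul_add, map_add, hx, hy]

theorem T1_right_mul (Δ : A →ₐ[ℂ] A ⊗[ℂ] A) (a : A) (x : A ⊗[ℂ] A) :
    T1 Δ (x * ((1 : A) ⊗ₜ[ℂ] a)) = T1 Δ x * ((1 : A) ⊗ₜ[ℂ] a) := by
  induction x with
  | zero => simp
  | tmul p q => simp [T1_tmul, mul_assoc]
  | add x y hx hy => simp only [add_mul, map_add, hx, hy]

theorem T2_coassoc (Δ : A →ₐ[ℂ] A ⊗[ℂ] A) (hΔ : IsCoassoc Δ) (x : A ⊗[ℂ] A) :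
    TensorProduct.map LinearMap.id Δ.toLinearMap (T2 Δ x) =
      TensorProduct.assoc ℂ A A A (TensorProduct.map (T2 Δ) LinearMap.id
        ((TensorProduct.assoc ℂ A A A).symm
          (TensorProduct.map LinearMap.id Δ.toLinearMap x))) := by
  induction x with
  | zero => simp
  | add x y hx hy => simp only [map_add, hx, hy]
  | tmul a b =>
    have h1 : ∀ y : A ⊗[ℂ] A, TensorProduct.map LinearMap.id Δ.toLinearMap
        ((a ⊗ₜ[ℂ] (1 : A)) * y) = (a ⊗ₜ[ℂ] (1 : A ⊗[ℂ] A)) *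
          TensorProduct.map LinearMap.id Δ.toLinearMap y := by
      intro y
      induction y with
      | zero => simp
      | tmul p q => simp
      | add x y hx hy => simp only [mul_add, map_add, hx, hy]
    have h2 : ∀ z : (A ⊗[ℂ] A) ⊗[ℂ] A, TensorProduct.assoc ℂ A A A
        (((a ⊗ₜ[ℂ] (1 : A)) ⊗ₜ[ℂ] (1 : A)) * z) = (a ⊗ₜ[ℂ] (1 : A ⊗[ℂ] A)) *
          TensorProduct.assoc ℂ A A A z := by
      intro z
      induction z with
      | zero => simp
      | add x y hx hy => simp only [mul_add, map_add, hx, hy]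
      | tmul w q =>
        induction w with
        | zero => simp
        | tmul p r => simp
        | add x y hx hy =>
          simp only [mul_add, map_add, TensorProduct.add_tmul, hx, hy]
    have h3 : ∀ y : A ⊗[ℂ] A, TensorProduct.map (T2 Δ) LinearMap.id
        ((TensorProduct.assoc ℂ A A A).symm (a ⊗ₜ[ℂ] y)) =
        ((a ⊗ₜ[ℂ] (1 : A)) ⊗ₜ[ℂ] (1 : A)) *
          TensorProduct.map Δ.toLinearMap LinearMap.id y := by
      intro y
      induction y with
      | zero => simp
      | tmul p q => simp [T2_tmul]
      | add x y hx hy => simp only [mul_add, map_add, TensorProduct.tmul_add, hx, hy]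
    rw [T2_tmul, h1, ← hΔ, ← h2, ← h3]
    simp

theorem T2_eq_mul (Δ : A →ₐ[ℂ] A ⊗[ℂ] A) (x : A ⊗[ℂ] A) :
    T2 Δ x = TensorProduct.map (LinearMap.mul' ℂ A) LinearMap.id
      ((TensorProduct.assoc ℂ A A A).symm
          (TensorProduct.map LinearMap.id Δ.toLinearMap x)) := by
  induction x with
  | zero => simp
  | add x y hx hy => simp only [map_add, hx, hy]
  | tmul a b =>
    have h3 : ∀ y : A ⊗[ℂ] A, TensorProduct.map (LinearMap.mul' ℂ A) LinearMap.id
        ((TensorProduct.assoc ℂ A A A).symm (a ⊗ₜ[ℂ] y)) = (a ⊗ₜ[ℂ] (1 : A)) * y := by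
      intro y
      induction y with
      | zero => simp
      | tmul p q => simp
      | add x y hx hy => simp only [mul_add, map_add, TensorProduct.tmul_add, hx, hy]
    rw [T2_tmul, ← h3]
    simp

end helpers

/-- Finite-dimensional Larson-Sweedler theorem (integral version): if `A` is
finite-dimensional, the left leg of `Δ` is all of `A` and there is a faithful left integral,
then `T₁` and `T₂` are bijective and `(A, Δ)` is a Hopf algebra. -/
theorem larson_sweedler_finite_dimensional_integral
    [FiniteDimensional ℂ A]
    (Δ : A →ₐ[ℂ] A ⊗[ℂ] A) (hΔ : IsCoassoc Δ) (hleg : leftLeg Δ = ⊤)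
    (φ : A →ₗ[ℂ] ℂ) (hφ : IsLeftIntegral Δ φ) (hφf : IsFaithful φ) :
    (Function.Bijective (T1 Δ) ∧ Function.Bijective (T2 Δ)) ∧
    ∃ (ε : A →ₗ[ℂ] ℂ) (S : A →ₗ[ℂ] A), ∀ a : A,
      sliceL ε (Δ a) = a ∧ sliceR ε (Δ a) = a ∧
      LinearMap.mul' ℂ A (TensorProduct.map S LinearMap.id (Δ a)) = ε a • (1 : A) ∧
      LinearMap.mul' ℂ A (TensorProduct.map LinearMap.id S (Δ a)) = ε a • (1 : A) := by
  have hinj := T2_inj Δ φ hφ hφf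
  have hsurj : Function.Surjective (T2 Δ) := LinearMap.injective_iff_surjective.1 hinj
  let e : (A ⊗[ℂ] A) ≃ₗ[ℂ] (A ⊗[ℂ] A) := LinearEquiv.ofBijective (T2 Δ) ⟨hinj, hsurj⟩
  obtain ⟨U, hU⟩ : ∃ U : A ⊗[ℂ] A →ₗ[ℂ] A ⊗[ℂ] A, U = e.symm.toLinearMap := ⟨_, rfl⟩
  have hTU : ∀ x, T2 Δ (U x) = x := fun x => by rw [hU]; exact e.apply_symm_apply x
  have hUT : ∀ x, U (T2 Δ x) = x := fun x => by rw [hU]; exact e.symm_apply_apply x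
  have hUT' : U ∘ₗ T2 Δ = LinearMap.id := LinearMap.ext hUT
  have hUl : ∀ (a : A) (x : A ⊗[ℂ] A),
      U ((a ⊗ₜ[ℂ] (1 : A)) * x) = (a ⊗ₜ[ℂ] (1 : A)) * U x := by
    intro a x
    apply hinj
    rw [hTU, T2_left_mul, hTU]
  have hUab : ∀ a b : A, U (a ⊗ₜ[ℂ] b) = (a ⊗ₜ[ℂ] (1 : A)) * U ((1 : A) ⊗ₜ[ℂ] b) := by
    intro a b
    rw [← hUl]
    simp
  have hml : ∀ (a : A) (x : A ⊗[ℂ] A), LinearMap.mul' ℂ A ((a ⊗ₜ[ℂ] (1 : A)) * x) =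
      a * LinearMap.mul' ℂ A x := by
    intro a x
    induction x with
    | zero => simp
    | tmul p q => simp [mul_assoc]
    | add x y hx hy => simp only [mul_add, map_add, hx, hy]
  have K1 : ∀ b : A, TensorProduct.map LinearMap.id Δ.toLinearMap (U ((1 : A) ⊗ₜ[ℂ] b)) =
      TensorProduct.assoc ℂ A A A (TensorProduct.map U LinearMap.id
        ((TensorProduct.assoc ℂ A A A).symm ((1 : A) ⊗ₜ[ℂ] Δ b))) := by
    intro b
    have h := T2_coassoc Δ hΔ (U ((1 : A) ⊗ₜ[ℂ] b))
    rw [hTU, TensorProduct.map_tmul, LinearMap.id_apply, AlgHom.toLinearMap_apply] at h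
    rw [h, LinearEquiv.symm_apply_apply, ← LinearMap.comp_apply (TensorProduct.map U _),
      ← TensorProduct.map_comp, hUT', LinearMap.comp_id, TensorProduct.map_id,
      LinearMap.id_apply, LinearEquiv.apply_symm_apply]
  obtain ⟨E, hE⟩ : ∃ E : A →ₗ[ℂ] A, ∀ b, E b = LinearMap.mul' ℂ A (U ((1 : A) ⊗ₜ[ℂ] b)) :=
    ⟨LinearMap.mul' ℂ A ∘ₗ U ∘ₗ TensorProduct.mk ℂ A A 1, fun b => rfl⟩
  have K3 : ∀ b : A, (1 : A) ⊗ₜ[ℂ] b = TensorProduct.map E LinearMap.id (Δ b) := by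
    intro b
    have h := T2_eq_mul Δ (U ((1 : A) ⊗ₜ[ℂ] b))
    rw [hTU, K1, LinearEquiv.symm_apply_apply] at h
    rw [h]
    generalize Δ b = y
    induction y with
    | zero => simp
    | tmul p q => simp [hE]
    | add x y hx hy => simp only [map_add, TensorProduct.tmul_add, hx, hy]
  have K4 : ∀ (ω : A →ₗ[ℂ] ℂ) (b : A), E (sliceR ω (Δ b)) = ω b • (1 : A) := by
    intro ω b
    rw [← sliceR_tmul, K3]
    generalize Δ b = y
    induction y with
    | zero => simp
    | tmul p q => simp [sliceR_tmul]
    | add x y hx hy => simp only [map_add, hx, hy]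
  have hne : Nontrivial A := by
    by_contra hn
    rw [not_nontrivial_iff_subsingleton] at hn
    exact hφ.1 (LinearMap.ext fun a => by rw [Subsingleton.elim a 0]; simp)
  obtain ⟨f, hf⟩ : ∃ f : A →ₗ[ℂ] ℂ, f 1 = 1 := by
    obtain ⟨f, hf⟩ := LinearMap.exists_leftInverse_of_injective (Algebra.linearMap ℂ A)
      (LinearMap.ker_eq_bot.2 (algebraMap ℂ A).injective)
    refine ⟨f, ?_⟩
    have := LinearMap.congr_fun hf 1
    simpa using this
  obtain ⟨ε, hε⟩ : ∃ ε : A →ₗ[ℂ] ℂ, ∀ a, ε a = f (E a) := ⟨f ∘ₗ E, fun _ => rfl⟩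
  have hEε : ∀ a, E a = ε a • (1 : A) := by
    intro a
    have ha : a ∈ leftLeg Δ := hleg ▸ Submodule.mem_top
    unfold leftLeg at ha
    induction ha using Submodule.span_induction with
    | mem x hx =>
      obtain ⟨b, ω, rfl⟩ := hx
      rw [hε, K4]
      simp [hf]
    | zero => simp
    | add x y _ _ hx hy => rw [map_add, map_add, hx, hy, add_smul]
    | smul c x _ hx => rw [map_smul, map_smul, hx, smul_assoc]
  have hL : ∀ a, sliceL ε (Δ a) = a := by
    intro a
    have h := congrArg (sliceL f) (K3 a)
    rw [sliceL_tmul, hf, one_smul] at h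
    conv_rhs => rw [h]
    generalize Δ a = y
    induction y with
    | zero => simp
    | tmul p q => simp [sliceL_tmul, hε]
    | add x y hx hy => simp only [map_add, hx, hy]
  have hmU : ∀ y, LinearMap.mul' ℂ A (U y) = sliceR ε y := by
    intro y
    induction y with
    | zero => simp
    | tmul p q => rw [hUab, hml, ← hE, hEε, sliceR_tmul]; simp
    | add x y hx hy => simp only [map_add, hx, hy]
  have hT1' : ∀ b, T2 Δ ((1 : A) ⊗ₜ[ℂ] b) = Δ b := by
    intro b
    rw [T2_tmul, ← Algebra.TensorProduct.one_def, one_mul]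
  have hR : ∀ a, sliceR ε (Δ a) = a := by
    intro a
    rw [← hmU, ← hT1', hUT]
    simp
  obtain ⟨S, hS⟩ : ∃ S : A →ₗ[ℂ] A, ∀ b, S b = sliceR ε (U ((1 : A) ⊗ₜ[ℂ] b)) :=
    ⟨sliceR ε ∘ₗ U ∘ₗ TensorProduct.mk ℂ A A 1, fun b => rfl⟩
  have K5 : ∀ b, U ((1 : A) ⊗ₜ[ℂ] b) = TensorProduct.map S LinearMap.id (Δ b) := by
    intro b
    have h := congrArg (TensorProduct.map LinearMap.id (sliceL ε)) (K1 b)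
    have hLD : sliceL ε ∘ₗ Δ.toLinearMap = LinearMap.id := LinearMap.ext hL
    rw [← LinearMap.comp_apply, ← TensorProduct.map_comp, hLD, LinearMap.comp_id,
      TensorProduct.map_id, LinearMap.id_apply] at h
    rw [h]
    have h2 : ∀ (z : A ⊗[ℂ] A) (q : A), TensorProduct.map LinearMap.id (sliceL ε)
        (TensorProduct.assoc ℂ A A A (z ⊗ₜ[ℂ] q)) = sliceR ε z ⊗ₜ[ℂ] q := by
      intro z q
      induction z with
      | zero => simp
      | tmul p r => simp [sliceL_tmul, sliceR_tmul, TensorProduct.smul_tmul]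
      | add x y hx hy => simp only [map_add, TensorProduct.add_tmul, hx, hy]
    generalize Δ b = y
    induction y with
    | zero => simp
    | tmul p q =>
      rw [TensorProduct.assoc_symm_tmul, TensorProduct.map_tmul, h2, TensorProduct.map_tmul, hS]
    | add x y hx hy => simp only [map_add, TensorProduct.tmul_add, hx, hy]
  have hS1 : ∀ a, LinearMap.mul' ℂ A (TensorProduct.map S LinearMap.id (Δ a)) =
      ε a • (1 : A) := by
    intro a
    rw [← K5, ← hE, hEε]
  have hS2 : ∀ a, LinearMap.mul' ℂ A (TensorProduct.map LinearMap.id S (Δ a)) =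
      ε a • (1 : A) := by
    intro a
    have h : ∀ y, sliceR ε (U y) = LinearMap.mul' ℂ A (TensorProduct.map LinearMap.id S y) := by
      intro y
      induction y with
      | zero => simp
      | tmul p q => rw [hUab, sliceR_left_mul, ← hS]; simp
      | add x y hx hy => simp only [map_add, hx, hy]
    rw [← h, ← hT1', hUT, sliceR_tmul]
  have hT1s : Function.Surjective (T1 Δ) := by
    have h1 : ∀ a, T1 Δ (TensorProduct.map LinearMap.id S (Δ a)) = a ⊗ₜ[ℂ] (1 : A) := by
      intro a
      have h2 : ∀ (z : A ⊗[ℂ] A) (q : A), TensorProduct.map LinearMap.id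
          (LinearMap.mul' ℂ A ∘ₗ TensorProduct.map LinearMap.id S)
          (TensorProduct.assoc ℂ A A A (z ⊗ₜ[ℂ] q)) = z * ((1 : A) ⊗ₜ[ℂ] S q) := by
        intro z q
        induction z with
        | zero => simp
        | tmul p r => simp
        | add x y hx hy => simp only [map_add, TensorProduct.add_tmul, add_mul, hx, hy]
      have h3 : ∀ y : A ⊗[ℂ] A, T1 Δ (TensorProduct.map LinearMap.id S y) =
          TensorProduct.map LinearMap.id
          (LinearMap.mul' ℂ A ∘ₗ TensorProduct.map LinearMap.id S)
          (TensorProduct.assoc ℂ A A A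
            (TensorProduct.map Δ.toLinearMap LinearMap.id y)) := by
        intro y
        induction y with
        | zero => simp
        | tmul p q =>
          rw [TensorProduct.map_tmul, TensorProduct.map_tmul, h2, T1_tmul]
          simp
        | add x y hx hy => simp only [map_add, hx, hy]
      rw [h3, hΔ]
      have h4 : ∀ y : A ⊗[ℂ] A, TensorProduct.map LinearMap.id
          (LinearMap.mul' ℂ A ∘ₗ TensorProduct.map LinearMap.id S)
          (TensorProduct.map LinearMap.id Δ.toLinearMap y) =
          sliceR ε y ⊗ₜ[ℂ] (1 : A) := by
        intro y
        induction y with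
        | zero => simp
        | tmul p q =>
          rw [TensorProduct.map_tmul, TensorProduct.map_tmul, LinearMap.comp_apply,
            AlgHom.toLinearMap_apply, hS2, sliceR_tmul, TensorProduct.smul_tmul]
          simp
        | add x y hx hy => simp only [map_add, TensorProduct.add_tmul, hx, hy]
      rw [h4, hR]
    intro y
    induction y with
    | zero => exact ⟨0, map_zero _⟩
    | tmul a c =>
      refine ⟨TensorProduct.map LinearMap.id S (Δ a) * ((1 : A) ⊗ₜ[ℂ] c), ?_⟩
      rw [T1_right_mul, h1]
      simp
    | add x y hx hy =>
      obtain ⟨u, rfl⟩ := hx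
      obtain ⟨v, rfl⟩ := hy
      exact ⟨u + v, map_add _ _ _⟩
  exact ⟨⟨⟨LinearMap.injective_iff_surjective.2 hT1s, hT1s⟩, hinj, hsurj⟩, ε, S,
    fun a => ⟨hL a, hR a, hS1 a, hS2 a⟩⟩
end
end

section
/- Let A be an associative unital algebra over ℂ with a full comultiplication Δ, and assume there exist a faithful left integral φ and a faithful right integral on A. Then there exists a unique linear map ε : A → ℂ such that ε((id ⊗ φ)(Δ(a)(1 ⊗ b))) = φ(ab) for all a, b ∈ A (this determines ε on all of A since A is spanned by elements of the form (id ⊗ φ)(Δ(a)(1 ⊗ b))). Moreover ε is an algebra homomorphism, it satisfies (ε ⊗ id)(Δ(a)) = a and (id ⊗ ε)(Δ(a)) = a for all a ∈ A, and any linear functional ω : A → ℂ satisfying (ε ⊗ id)(Δ(a)) = a for all a, or satisfying (id ⊗ ω)(Δ(a)) = a for all a, must equal ε. -/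
open TensorProduct

noncomputable section

variable {A : Type*} [Ring A] [Algebra ℂ A]

theorem cx_sliceR_tmul (ω : A →ₗ[ℂ] ℂ) (p q : A) :
    sliceR ω (p ⊗ₜ[ℂ] q) = ω q • p := by simp [sliceR]

theorem cx_sliceL_tmul (ω : A →ₗ[ℂ] ℂ) (p q : A) :
    sliceL ω (p ⊗ₜ[ℂ] q) = ω p • q := by simp [sliceL]

theorem cx_T1_tmul (Δ : A →ₐ[ℂ] A ⊗[ℂ] A) (p q : A) :
    T1 Δ (p ⊗ₜ[ℂ] q) = Δ p * ((1 : A) ⊗ₜ[ℂ] q) := by simp [T1]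

theorem cx_slice_swap (ω ρ : A →ₗ[ℂ] ℂ) (t : A ⊗[ℂ] A) :
    ρ (sliceR ω t) = ω (sliceL ρ t) := by
  induction t with
  | zero => simp
  | tmul p q => simp [cx_sliceR_tmul, cx_sliceL_tmul, mul_comm]
  | add x y hx hy => simp [hx, hy]

theorem cx_eq_zero_of_sliceR (t : A ⊗[ℂ] A) (h : ∀ ω : A →ₗ[ℂ] ℂ, sliceR ω t = 0) : t = 0 := by
  classical
  let b := Module.Basis.ofVectorSpace ℂ A
  apply (TensorProduct.equivFinsuppOfBasisRight (M := A) b).injective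
  rw [map_zero]
  ext i
  rw [Finsupp.zero_apply, ← h (b.coord i)]
  clear h
  induction t with
  | zero => simp
  | tmul p q => simp [cx_sliceR_tmul]
  | add x y hx hy => simp [hx, hy]

theorem cx_eq_zero_of_leg (Δ : A →ₐ[ℂ] A ⊗[ℂ] A) (h : leftLeg Δ = ⊤) (ρ : A →ₗ[ℂ] ℂ)
    (hρ : ∀ a, sliceL ρ (Δ a) = 0) : ρ = 0 := by
  have : leftLeg Δ ≤ LinearMap.ker ρ := by
    refine Submodule.span_le.2 ?_
    rintro y ⟨a, ω, rfl⟩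
    simp [cx_slice_swap, hρ]
  rw [h] at this
  exact LinearMap.ker_eq_top.1 (top_le_iff.1 this)

theorem cx_eq_zero_of_leg' (Δ : A →ₐ[ℂ] A ⊗[ℂ] A) (h : rightLeg Δ = ⊤) (ρ : A →ₗ[ℂ] ℂ)
    (hρ : ∀ a, sliceR ρ (Δ a) = 0) : ρ = 0 := by
  have : rightLeg Δ ≤ LinearMap.ker ρ := by
    refine Submodule.span_le.2 ?_
    rintro y ⟨a, ω, rfl⟩
    simp [← cx_slice_swap, hρ]
  rw [h] at this
  exact LinearMap.ker_eq_top.1 (top_le_iff.1 this)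

theorem cx_sliceL_mul (ω : A →ₗ[ℂ] ℂ) (t : A ⊗[ℂ] A) (c : A) :
    sliceL ω (t * ((1 : A) ⊗ₜ[ℂ] c)) = sliceL ω t * c := by
  induction t with
  | zero => simp
  | tmul p q => simp [cx_sliceL_tmul]
  | add x y hx hy => simp [hx, hy, add_mul]

/-- Functionals killing all `(id ⊗ φ)(Δ(a)(1 ⊗ b))` vanish. -/
theorem cx_eq_zero_of_phi (Δ : A →ₐ[ℂ] A ⊗[ℂ] A) (h : leftLeg Δ = ⊤)
    (φ : A →ₗ[ℂ] ℂ) (hφf : IsFaithful φ) (ρ : A →ₗ[ℂ] ℂ)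
    (hρ : ∀ a b : A, ρ (sliceR φ (Δ a * ((1 : A) ⊗ₜ[ℂ] b))) = 0) : ρ = 0 := by
  refine cx_eq_zero_of_leg Δ h ρ fun a => hφf.2 _ fun b => ?_
  rw [← cx_sliceL_mul, ← cx_slice_swap, hρ]

theorem cx_span (Δ : A →ₐ[ℂ] A ⊗[ℂ] A) (h : leftLeg Δ = ⊤)
    (φ : A →ₗ[ℂ] ℂ) (hφf : IsFaithful φ) :
    Submodule.span ℂ {y : A | ∃ a b : A, y = sliceR φ (Δ a * ((1 : A) ⊗ₜ[ℂ] b))} = ⊤ := by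
  by_contra hne
  obtain ⟨f, hf, hle⟩ := Submodule.exists_le_ker_of_lt_top _ (lt_top_iff_ne_top.2 hne)
  exact hf (cx_eq_zero_of_phi Δ h φ hφf f fun a b => hle (Submodule.subset_span ⟨a, b, rfl⟩))

theorem cx_T1_injective (Δ : A →ₐ[ℂ] A ⊗[ℂ] A) (ψ : A →ₗ[ℂ] ℂ) (hψ : IsRightIntegral Δ ψ)
    (hψf : IsFaithful ψ) : Function.Injective (T1 Δ) := by
  rw [injective_iff_map_eq_zero]
  intro t ht
  refine cx_eq_zero_of_sliceR t fun ω => hψf.1 _ fun x => ?_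
  have key : ∀ t : A ⊗[ℂ] A, sliceL (ψ ∘ₗ LinearMap.mulLeft ℂ x) t = sliceL ψ (Δ x * T1 Δ t) := by
    intro t
    induction t with
    | zero => simp
    | tmul p q =>
      rw [cx_T1_tmul, ← mul_assoc, ← map_mul, cx_sliceL_mul, hψ.2, cx_sliceL_tmul]; simp
    | add x y hx hy => simp [hx, hy, mul_add]
  have h2 := cx_slice_swap ω (ψ ∘ₗ LinearMap.mulLeft ℂ x) t
  rw [key, ht] at h2
  simpa using h2

/-- `p ⊗ w ↦ p ⊗ (id ⊗ φ)(w v)`. -/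
def cxG (φ : A →ₗ[ℂ] ℂ) (v : A ⊗[ℂ] A) : A ⊗[ℂ] (A ⊗[ℂ] A) →ₗ[ℂ] A ⊗[ℂ] A :=
  TensorProduct.map LinearMap.id (sliceR φ ∘ₗ LinearMap.mulRight ℂ v)

/-- `p ⊗ q ↦ p ⊗ (id ⊗ φ)((1 ⊗ q) v)`. -/
def cxW (φ : A →ₗ[ℂ] ℂ) (v : A ⊗[ℂ] A) : A ⊗[ℂ] A →ₗ[ℂ] A ⊗[ℂ] A :=
  TensorProduct.map LinearMap.id
    (sliceR φ ∘ₗ LinearMap.mulRight ℂ v ∘ₗ TensorProduct.mk ℂ A A 1)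

theorem cx_sliceR_mul (φ : A →ₗ[ℂ] ℂ) (c q : A) (v : A ⊗[ℂ] A) :
    sliceR φ ((c ⊗ₜ[ℂ] q) * v) = c * sliceR φ (((1 : A) ⊗ₜ[ℂ] q) * v) := by
  induction v with
  | zero => simp
  | tmul r s => simp [cx_sliceR_tmul]
  | add x y hx hy => simp [hx, hy, mul_add]

theorem cx_claim1 (Δ : A →ₐ[ℂ] A ⊗[ℂ] A) (φ : A →ₗ[ℂ] ℂ) (u v : A ⊗[ℂ] A) :
    cxG φ v (TensorProduct.assoc ℂ A A A (TensorProduct.map Δ.toLinearMap LinearMap.id u)) =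
      T1 Δ (cxW φ v u) := by
  induction u with
  | zero => simp
  | add x y hx hy => simp only [map_add, hx, hy]
  | tmul p q =>
    simp only [cxW, TensorProduct.map_tmul, cx_T1_tmul, AlgHom.toLinearMap_apply,
      LinearMap.id_apply, LinearMap.comp_apply, LinearMap.mulRight_apply, TensorProduct.mk_apply]
    generalize Δ p = t
    induction t with
    | zero => simp
    | add x y hx hy => simp only [map_add, TensorProduct.add_tmul, add_mul, hx, hy]
    | tmul c d =>
      simp only [cxG, TensorProduct.assoc_tmul, TensorProduct.map_tmul, LinearMap.id_apply,
        LinearMap.comp_apply, LinearMap.mulRight_apply, Algebra.TensorProduct.tmul_mul_tmul,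
        mul_one]
      rw [cx_sliceR_mul]

theorem cx_claim2 (Δ : A →ₐ[ℂ] A ⊗[ℂ] A) (φ : A →ₗ[ℂ] ℂ) (hφ : IsLeftIntegral Δ φ)
    (b : A) (u : A ⊗[ℂ] A) :
    cxG φ (Δ b) (TensorProduct.map LinearMap.id Δ.toLinearMap u) =
      sliceR φ (u * ((1 : A) ⊗ₜ[ℂ] b)) ⊗ₜ[ℂ] (1 : A) := by
  induction u with
  | zero => simp
  | add x y hx hy => simp only [map_add, TensorProduct.add_tmul, add_mul, hx, hy]
  | tmul p q =>
    simp only [cxG, TensorProduct.map_tmul, LinearMap.id_apply, AlgHom.toLinearMap_apply,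
      LinearMap.comp_apply, LinearMap.mulRight_apply, Algebra.TensorProduct.tmul_mul_tmul, mul_one]
    rw [← map_mul, hφ.2, cx_sliceR_tmul, TensorProduct.tmul_smul, TensorProduct.smul_tmul']

theorem cx_mul_W (φ : A →ₗ[ℂ] ℂ) (u v : A ⊗[ℂ] A) :
    LinearMap.mul' ℂ A (cxW φ v u) = sliceR φ (u * v) := by
  induction u with
  | zero => simp
  | add x y hx hy => simp only [map_add, add_mul, hx, hy]
  | tmul p q =>
    rw [cx_sliceR_mul]
    simp [cxW]

theorem cx_T1_W (Δ : A →ₐ[ℂ] A ⊗[ℂ] A) (hΔ : IsCoassoc Δ)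
    (φ : A →ₗ[ℂ] ℂ) (hφ : IsLeftIntegral Δ φ) (a b : A) :
    T1 Δ (cxW φ (Δ b) (Δ a)) = sliceR φ (Δ a * ((1 : A) ⊗ₜ[ℂ] b)) ⊗ₜ[ℂ] (1 : A) := by
  rw [← cx_claim1, hΔ a, cx_claim2 Δ φ hφ]

theorem cx_T1_mul (Δ : A →ₐ[ℂ] A ⊗[ℂ] A) (t : A ⊗[ℂ] A) (c : A) :
    T1 Δ (t * ((1 : A) ⊗ₜ[ℂ] c)) = T1 Δ t * ((1 : A) ⊗ₜ[ℂ] c) := by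
  induction t with
  | zero => simp
  | add x y hx hy => simp only [map_add, add_mul, hx, hy]
  | tmul p q => simp [cx_T1_tmul, mul_assoc]

/-- Existence of `ε` on `T₁`-images. -/
theorem cx_exists (Δ : A →ₐ[ℂ] A ⊗[ℂ] A) (hΔ : IsCoassoc Δ) (hfull : IsFull Δ)
    (φ : A →ₗ[ℂ] ℂ) (hφ : IsLeftIntegral Δ φ) (hφf : IsFaithful φ)
    (ψ : A →ₗ[ℂ] ℂ) (hψ : IsRightIntegral Δ ψ) (hψf : IsFaithful ψ) :
    Function.Surjective (T1 Δ) ∧ ∃ ε : A →ₗ[ℂ] ℂ,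
      (∀ a b : A, ε (sliceR φ (Δ a * ((1 : A) ⊗ₜ[ℂ] b))) = φ (a * b)) ∧
      ∀ t, sliceL ε (T1 Δ t) = LinearMap.mul' ℂ A t := by
  have hspan := cx_span Δ hfull.1 φ hφf
  have hinj := cx_T1_injective Δ ψ hψ hψf
  have hne : (1 : A) ≠ 0 := by
    intro h
    refine hφ.1 (LinearMap.ext fun a => ?_)
    rw [← mul_one a, h]; simp
  have hx : ∀ x : A, ∃ t, T1 Δ t = x ⊗ₜ[ℂ] (1 : A) ∧
      ∃ c : ℂ, LinearMap.mul' ℂ A t = c • (1 : A) := by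
    intro x
    have hm : x ∈ Submodule.span ℂ
        {y : A | ∃ a b : A, y = sliceR φ (Δ a * ((1 : A) ⊗ₜ[ℂ] b))} := by
      rw [hspan]; trivial
    induction hm using Submodule.span_induction with
    | mem y hy =>
      obtain ⟨a, b, rfl⟩ := hy
      refine ⟨_, cx_T1_W Δ hΔ φ hφ a b, φ (a * b), ?_⟩
      rw [cx_mul_W, ← map_mul, hφ.2]
    | zero => exact ⟨0, by simp, 0, by simp⟩
    | add y z _ _ hy hz =>
      obtain ⟨t, ht, c, hc⟩ := hy
      obtain ⟨s, hs, d, hd⟩ := hz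
      exact ⟨t + s, by rw [map_add, ht, hs, TensorProduct.add_tmul], c + d,
        by rw [map_add, hc, hd, add_smul]⟩
    | smul k y _ hy =>
      obtain ⟨t, ht, c, hc⟩ := hy
      exact ⟨k • t, by rw [map_smul, ht, TensorProduct.smul_tmul'], k * c,
        by rw [map_smul, hc, smul_smul]⟩
  choose t ht c hc using hx
  have hcinj : ∀ c d : ℂ, c • (1 : A) = d • (1 : A) → c = d := fun c d h =>
    smul_left_injective ℂ hne h
  let ε : A →ₗ[ℂ] ℂ :=
    { toFun := c
      map_add' := by
        intro x y
        apply hcinj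
        rw [add_smul, ← hc, ← hc, ← hc, ← map_add]
        congr 1
        apply hinj
        rw [map_add, ht, ht, ht, TensorProduct.add_tmul]
      map_smul' := by
        intro k x
        apply hcinj
        rw [RingHom.id_apply, smul_eq_mul, mul_smul, ← hc, ← hc, ← map_smul]
        congr 1
        apply hinj
        rw [map_smul, ht, ht, TensorProduct.smul_tmul'] }
  have hε : ∀ x, ε x = c x := fun _ => rfl
  have hpq : ∀ p q : A, T1 Δ (t p * ((1 : A) ⊗ₜ[ℂ] q)) = p ⊗ₜ[ℂ] q := by
    intro p q
    rw [cx_T1_mul, ht]; simp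
  have hmul : ∀ (s : A ⊗[ℂ] A) (q : A),
      LinearMap.mul' ℂ A (s * ((1 : A) ⊗ₜ[ℂ] q)) = LinearMap.mul' ℂ A s * q := by
    intro s q
    induction s with
    | zero => simp
    | add x y hx hy => simp only [map_add, add_mul, hx, hy]
    | tmul p r => simp [mul_assoc]
  have hboth : ∀ z : A ⊗[ℂ] A, ∃ s, T1 Δ s = z ∧ sliceL ε z = LinearMap.mul' ℂ A s := by
    intro z
    induction z with
    | zero => exact ⟨0, by simp, by simp⟩
    | add x y hx hy =>
      obtain ⟨s, h1, h2⟩ := hx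
      obtain ⟨s', h1', h2'⟩ := hy
      exact ⟨s + s', by rw [map_add, h1, h1'], by rw [map_add, map_add, h2, h2']⟩
    | tmul p q =>
      refine ⟨_, hpq p q, ?_⟩
      rw [hmul, hc, cx_sliceL_tmul, hε]; simp
  refine ⟨fun z => (hboth z).imp fun _ h => h.1, ε, ?_, ?_⟩
  · intro a b
    apply hcinj
    rw [hε, ← hc, ← hφ.2, map_mul Δ, ← cx_mul_W φ (Δ a) (Δ b)]
    congr 1
    apply hinj
    rw [ht, cx_T1_W Δ hΔ φ hφ]
  · intro s
    obtain ⟨s', h1, h2⟩ := hboth (T1 Δ s)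
    rw [h2, hinj h1]

/-- Sliced coassociativity in the middle leg. -/
theorem cx_mid (Δ : A →ₐ[ℂ] A ⊗[ℂ] A) (hΔ : IsCoassoc Δ) (ε : A →ₗ[ℂ] ℂ)
    (h : ∀ a, sliceL ε (Δ a) = a) (a : A) :
    TensorProduct.map (sliceR ε ∘ₗ Δ.toLinearMap) LinearMap.id (Δ a) = Δ a := by
  have h1 : ∀ u : A ⊗[ℂ] A,
      TensorProduct.map LinearMap.id (sliceL ε) (TensorProduct.assoc ℂ A A A
        (TensorProduct.map Δ.toLinearMap LinearMap.id u)) =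
      TensorProduct.map (sliceR ε ∘ₗ Δ.toLinearMap) LinearMap.id u := by
    intro u
    induction u with
    | zero => simp
    | add x y hx hy => simp only [map_add, hx, hy]
    | tmul p q =>
      simp only [TensorProduct.map_tmul, AlgHom.toLinearMap_apply, LinearMap.id_apply,
        LinearMap.comp_apply]
      generalize Δ p = t
      induction t with
      | zero => simp
      | add x y hx hy => simp only [map_add, TensorProduct.add_tmul, hx, hy]
      | tmul c d => simp [cx_sliceR_tmul, cx_sliceL_tmul, TensorProduct.smul_tmul']
  have h2 : ∀ u : A ⊗[ℂ] A,
      TensorProduct.map LinearMap.id (sliceL ε)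
        (TensorProduct.map LinearMap.id Δ.toLinearMap u) = u := by
    intro u
    induction u with
    | zero => simp
    | add x y hx hy => simp only [map_add, hx, hy]
    | tmul p q => simp [h]
  rw [← h1, hΔ a, h2]

theorem cx_right (Δ : A →ₐ[ℂ] A ⊗[ℂ] A) (hΔ : IsCoassoc Δ) (hl : leftLeg Δ = ⊤) (ε : A →ₗ[ℂ] ℂ)
    (h : ∀ a, sliceL ε (Δ a) = a) (a : A) : sliceR ε (Δ a) = a := by
  have key : ∀ (F : A →ₗ[ℂ] A) (ω : A →ₗ[ℂ] ℂ) (u : A ⊗[ℂ] A),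
      F (sliceR ω u) = sliceR ω (TensorProduct.map F LinearMap.id u) := by
    intro F ω u
    induction u with
    | zero => simp
    | add x y hx hy => simp only [map_add, hx, hy]
    | tmul p q => simp [cx_sliceR_tmul]
  have hle : leftLeg Δ ≤ LinearMap.eqLocus (sliceR ε ∘ₗ Δ.toLinearMap) LinearMap.id := by
    refine Submodule.span_le.2 ?_
    rintro y ⟨a, ω, rfl⟩
    rw [SetLike.mem_coe, LinearMap.mem_eqLocus, key, cx_mid Δ hΔ ε h, LinearMap.id_apply]
  rw [hl] at hle
  exact hle (Submodule.mem_top (x := a))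

/-- There is a unique linear map `ε : A → ℂ` with `ε((id ⊗ φ)(Δ(a)(1 ⊗ b))) = φ(ab)`;
it is an algebra homomorphism, it is a counit, and it is the unique functional with the
counit property on either side. -/
theorem counit_exists_unique
    (Δ : A →ₐ[ℂ] A ⊗[ℂ] A) (hΔ : IsCoassoc Δ) (hfull : IsFull Δ)
    (φ : A →ₗ[ℂ] ℂ) (hφ : IsLeftIntegral Δ φ) (hφf : IsFaithful φ)
    (ψ : A →ₗ[ℂ] ℂ) (hψ : IsRightIntegral Δ ψ) (hψf : IsFaithful ψ) :
    ∃ ε : A →ₗ[ℂ] ℂ,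
      (∀ a b : A, ε (sliceR φ (Δ a * ((1 : A) ⊗ₜ[ℂ] b))) = φ (a * b)) ∧
      (∀ ε' : A →ₗ[ℂ] ℂ,
        (∀ a b : A, ε' (sliceR φ (Δ a * ((1 : A) ⊗ₜ[ℂ] b))) = φ (a * b)) → ε' = ε) ∧
      (∀ a b : A, ε (a * b) = ε a * ε b) ∧ ε 1 = 1 ∧
      (∀ a : A, sliceL ε (Δ a) = a) ∧ (∀ a : A, sliceR ε (Δ a) = a) ∧
      (∀ ω : A →ₗ[ℂ] ℂ, (∀ a : A, sliceL ω (Δ a) = a) → ω = ε) ∧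
      (∀ ω : A →ₗ[ℂ] ℂ, (∀ a : A, sliceR ω (Δ a) = a) → ω = ε) := by
  obtain ⟨hsurj, ε, h1, h2⟩ := cx_exists Δ hΔ hfull φ hφ hφf ψ hψ hψf
  have hL : ∀ a, sliceL ε (Δ a) = a := by
    intro a
    have := h2 (a ⊗ₜ[ℂ] (1 : A))
    rw [cx_T1_tmul, cx_sliceL_mul] at this
    simpa using this
  have hR := cx_right Δ hΔ hfull.1 ε hL
  have hne : (1 : A) ≠ 0 := by
    intro h
    refine hφ.1 (LinearMap.ext fun a => ?_)
    rw [← mul_one a, h]; simp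
  have hsub : ∀ (ω ρ : A →ₗ[ℂ] ℂ) (u : A ⊗[ℂ] A),
      sliceL (ω - ρ) u = sliceL ω u - sliceL ρ u := by
    intro ω ρ u
    induction u with
    | zero => simp
    | add x y hx hy => simp only [map_add, hx, hy]; abel
    | tmul c d => simp [cx_sliceL_tmul, sub_smul]
  have hsubR : ∀ (ω ρ : A →ₗ[ℂ] ℂ) (u : A ⊗[ℂ] A),
      sliceR (ω - ρ) u = sliceR ω u - sliceR ρ u := by
    intro ω ρ u
    induction u with
    | zero => simp
    | add x y hx hy => simp only [map_add, hx, hy]; abel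
    | tmul c d => simp [cx_sliceR_tmul, sub_smul]
  refine ⟨ε, h1, ?_, ?_, ?_, hL, hR, ?_, ?_⟩
  · intro ε' h'
    rw [← sub_eq_zero]
    refine cx_eq_zero_of_phi Δ hfull.1 φ hφf _ fun a b => ?_
    rw [LinearMap.sub_apply, h', h1, sub_self]
  · intro x p
    have hz : ∀ (a : A) (z : A ⊗[ℂ] A), sliceL ε (Δ a * z) = a * sliceL ε z := by
      intro a z
      obtain ⟨s, rfl⟩ := hsurj z
      induction s with
      | zero => simp
      | add x y hx hy => simp only [map_add, mul_add, hx, hy]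
      | tmul b c =>
        rw [cx_T1_tmul, ← mul_assoc, ← map_mul, cx_sliceL_mul, cx_sliceL_mul, hL, hL, mul_assoc]
    have hm : ∀ u : A ⊗[ℂ] A, sliceL (ε ∘ₗ LinearMap.mulRight ℂ p) u =
        sliceL ε (u * (p ⊗ₜ[ℂ] (1 : A))) := by
      intro u
      induction u with
      | zero => simp
      | add x y hx hy => simp only [map_add, add_mul, hx, hy]
      | tmul c d => simp [cx_sliceL_tmul]
    have hs : ∀ u : A ⊗[ℂ] A, sliceL (ε p • ε) u = ε p • sliceL ε u := by
      intro u
      simp [sliceL, TensorProduct.map_smul_left]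
    have h0 := cx_eq_zero_of_leg Δ hfull.1 (ε ∘ₗ LinearMap.mulRight ℂ p - ε p • ε) (by
      intro a
      rw [hsub, hm, hz, hs, hL, cx_sliceL_tmul]
      simp)
    have := LinearMap.congr_fun h0 x
    simp only [LinearMap.sub_apply, LinearMap.comp_apply, LinearMap.mulRight_apply,
      LinearMap.smul_apply, smul_eq_mul, LinearMap.zero_apply, sub_eq_zero] at this
    rw [this, mul_comm]
  · have := hL 1
    rw [map_one, Algebra.TensorProduct.one_def, cx_sliceL_tmul] at this
    refine smul_left_injective ℂ hne ?_
    simpa using this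
  · intro ω h
    rw [← sub_eq_zero]
    refine cx_eq_zero_of_leg Δ hfull.1 _ fun a => ?_
    rw [hsub, h, hL, sub_self]
  · intro ω h
    rw [← sub_eq_zero]
    refine cx_eq_zero_of_leg' Δ hfull.2 _ fun a => ?_
    rw [hsubR, h, hR, sub_self]
end
end
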